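/- arXiv:2310.12728 — 2 statements merged into one kernel-verified Lean document; each statement's English description precedes it below -/
import Mathlib

section
/- Let H be a Hopf algebra over a field k. For every right coideal subalgebra A of H and every left ideal coideal B of H one has: H·A⁺ ⊆ B if and only if A ⊆ ^{co H/B}H. In other words, the assignments A ↦ H·A⁺ and B ↦ ^{co H/B}H form a monotone Galois connection between the poset of right coideal subalgebras of H and the poset of left ideal coideals of H. -/
/-!
Write `π : H → H/B` for the quotient map. Both inclusions are equivalent to the identity
`π(a) = ε(a) π(1)` for all `a ∈ A`. Since `B` is a left ideal, `H·A⁺ ⊆ B` means `A⁺ ⊆ ker π`, and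
`a - ε(a) 1` lies in `A⁺` for every `a ∈ A`. On the other side, applying `id ⊗ ε` to
`(π ⊗ id)(Δ(a)) = π(1) ⊗ a` gives the identity; conversely, as `Δ(a) ∈ A ⊗ H`, the identity turns
`(π ⊗ id)(Δ(a))` into `π(1) ⊗ (ε ⊗ id)(Δ(a)) = π(1) ⊗ a`.
-/

open TensorProduct

section Coinvariants

variable {R C M : Type*} [CommSemiring R] [AddCommMonoid C] [Module R C] [Coalgebra R C]
  [AddCommMonoid M] [Module R M]

/-- A right coideal of a coalgebra `C`: a submodule `A` with `Δ(A) ⊆ A ⊗ C`, where `A ⊗ C` stands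
for its image in `C ⊗ C`. -/
def IsRightCoideal (A : Submodule R C) : Prop :=
  ∀ a ∈ A, Coalgebra.comul (R := R) a ∈
    Submodule.span R {x : C ⊗[R] C | ∃ b ∈ A, ∃ c : C, x = b ⊗ₜ[R] c}

/-- The left coinvariants `{c | (f ⊗ id)(Δ(c)) = m ⊗ c}` of a linear map `f : C → M` with respect to
`m : M`. For the quotient map `π : H → H/B` and `m = π(1)` this is `^{co H/B}H`. -/
def leftCoinvariants (f : C →ₗ[R] M) (m : M) : Submodule R C :=
  LinearMap.eqLocus (f.rTensor C ∘ₗ Coalgebra.comul) (TensorProduct.mk R M C m)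

theorem apply_eq_counit_smul_of_mem_leftCoinvariants {f : C →ₗ[R] M} {m : M} {c : C}
    (hc : c ∈ leftCoinvariants f m) : f c = Coalgebra.counit (R := R) c • m := by
  have hcoinv : f.rTensor C (Coalgebra.comul c) = m ⊗ₜ[R] c := hc
  have htmul : f c ⊗ₜ[R] (1 : R) = m ⊗ₜ[R] Coalgebra.counit (R := R) c := calc
    f c ⊗ₜ[R] (1 : R)
        = f.rTensor R ((Coalgebra.counit (R := R)).lTensor C (Coalgebra.comul c)) := by
          rw [Coalgebra.lTensor_counit_comul, LinearMap.rTensor_tmul]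
    _ = (Coalgebra.counit (R := R)).lTensor M (f.rTensor C (Coalgebra.comul c)) :=
          LinearMap.congr_fun ((LinearMap.rTensor_comp_lTensor ..).trans
            (LinearMap.lTensor_comp_rTensor ..).symm) _
    _ = m ⊗ₜ[R] Coalgebra.counit (R := R) c := by rw [hcoinv, LinearMap.lTensor_tmul]
  simpa only [TensorProduct.rid_tmul, one_smul] using congrArg (TensorProduct.rid R M) htmul

theorem IsRightCoideal.le_leftCoinvariants_iff {A : Submodule R C} (hA : IsRightCoideal A)
    (f : C →ₗ[R] M) (m : M) :
    A ≤ leftCoinvariants f m ↔ ∀ a ∈ A, f a = Coalgebra.counit (R := R) a • m := by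
  refine ⟨fun h a ha ↦ apply_eq_counit_smul_of_mem_leftCoinvariants (h ha), fun h a ha ↦ ?_⟩
  have hspan : f.rTensor C (Coalgebra.comul a) =
      (TensorProduct.mk R M C m ∘ₗ (TensorProduct.lid R C).toLinearMap ∘ₗ
        (Coalgebra.counit (R := R)).rTensor C) (Coalgebra.comul a) := by
    refine LinearMap.eqOn_span ?_ (hA a ha)
    rintro _ ⟨b, hb, c, rfl⟩
    simp [h b hb, TensorProduct.smul_tmul]
  change f.rTensor C (Coalgebra.comul a) = m ⊗ₜ[R] a
  simpa only [LinearMap.comp_apply, Coalgebra.rTensor_counit_comul, LinearEquiv.coe_coe,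
    TensorProduct.lid_tmul, one_smul, TensorProduct.mk_apply] using hspan

/-- The augmentation part `A⁺ = A ∩ ker ε` of a submodule `A` of a coalgebra. -/
def augmentationPart (A : Submodule R C) : Submodule R C :=
  A ⊓ LinearMap.ker (Coalgebra.counit (R := R))

end Coinvariants

theorem augmentationPart_le_ker_iff {R C M : Type*} [CommRing R] [AddCommGroup C] [Module R C]
    [Coalgebra R C] [AddCommGroup M] [Module R M] {A : Submodule R C} {e : C} (heA : e ∈ A)
    (he : Coalgebra.counit (R := R) e = 1) (f : C →ₗ[R] M) :
    augmentationPart A ≤ LinearMap.ker f ↔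
      ∀ a ∈ A, f a = Coalgebra.counit (R := R) a • f e := by
  constructor
  · intro h a ha
    have hmem : a - Coalgebra.counit (R := R) a • e ∈ augmentationPart A :=
      ⟨A.sub_mem ha (A.smul_mem _ heA), by simp [he]⟩
    simpa only [LinearMap.mem_ker, map_sub, map_smul, sub_eq_zero] using h hmem
  · rintro h a ⟨haA, ha⟩
    rw [LinearMap.mem_ker, h a haA, LinearMap.mem_ker.mp ha, zero_smul]

theorem top_mul_le_iff_of_mul_mem {R S : Type*} [CommSemiring R] [Semiring S] [Algebra R S]
    {N B : Submodule R S} (hB : ∀ s : S, ∀ b ∈ B, s * b ∈ B) : ⊤ * N ≤ B ↔ N ≤ B := by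
  refine ⟨fun h n hn ↦ ?_, fun h ↦ Submodule.mul_le.mpr fun s _ n hn ↦ hB s n (h hn)⟩
  simpa only [one_mul] using h (Submodule.mul_mem_mul (Submodule.mem_top (x := 1)) hn)

theorem top_mul_augmentationPart_eq_span {R H : Type*} [CommSemiring R] [Semiring H]
    [Bialgebra R H] (A : Submodule R H) :
    ⊤ * augmentationPart A = Submodule.span R {x : H | ∃ (h : H) (a : H), a ∈ A ∧
      Coalgebra.counit (R := R) a = 0 ∧ x = h * a} := by
  rw [Submodule.mul_eq_span_mul_set]
  congr 1
  ext x
  simp [Set.mem_mul, augmentationPart, and_assoc, eq_comm]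

theorem stmt2_general {R H : Type*} [CommRing R] [Ring H] [Bialgebra R H] {A B : Submodule R H}
    (hA : IsRightCoideal A) (hA_one : 1 ∈ A) (hB : ∀ h : H, ∀ b ∈ B, h * b ∈ B) :
    ⊤ * augmentationPart A ≤ B ↔ A ≤ leftCoinvariants B.mkQ (B.mkQ 1) := calc
  ⊤ * augmentationPart A ≤ B ↔ augmentationPart A ≤ LinearMap.ker B.mkQ := by
    rw [top_mul_le_iff_of_mul_mem hB, B.ker_mkQ]
  _ ↔ ∀ a ∈ A, B.mkQ a = Coalgebra.counit (R := R) a • B.mkQ 1 :=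
    augmentationPart_le_ker_iff hA_one Bialgebra.counit_one B.mkQ
  _ ↔ A ≤ leftCoinvariants B.mkQ (B.mkQ 1) := (hA.le_leftCoinvariants_iff _ _).symm

/-- for a Hopf algebra `H` over a field `k`, for every right coideal
subalgebra `A` of `H` and every left ideal coideal `B` of `H` one has
`H·A⁺ ⊆ B ↔ A ⊆ ^{co H/B}H`; that is, `A ↦ H·A⁺` and `B ↦ ^{co H/B}H` form a monotone
Galois connection. -/
theorem stmt2 (k H : Type*) [Field k] [Ring H] [HopfAlgebra k H]
    (A : Subalgebra k H)
    (hA : ∀ a ∈ A, Coalgebra.comul (R := k) a ∈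
      Submodule.span k {x : H ⊗[k] H | ∃ b ∈ A, ∃ h : H, x = b ⊗ₜ[k] h})
    (B : Submodule k H)
    (hBideal : ∀ (h : H), ∀ b ∈ B, h * b ∈ B)
    (hBcoideal : ∀ b ∈ B, Coalgebra.comul (R := k) b ∈
      Submodule.span k {z : H ⊗[k] H | ∃ b' ∈ B, ∃ h : H, z = b' ⊗ₜ[k] h}
      ⊔ Submodule.span k {z : H ⊗[k] H | ∃ h : H, ∃ b' ∈ B, z = h ⊗ₜ[k] b'})
    (hBcounit : ∀ b ∈ B, Coalgebra.counit (R := k) b = 0) :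
    Submodule.span k {x : H | ∃ (h : H) (a : H), a ∈ A ∧ Coalgebra.counit (R := k) a = 0
        ∧ x = h * a} ≤ B
    ↔ ∀ a ∈ A, TensorProduct.map B.mkQ LinearMap.id (Coalgebra.comul (R := k) a)
        = B.mkQ 1 ⊗ₜ[k] a := by
  exact top_mul_augmentationPart_eq_span (Subalgebra.toSubmodule A) ▸
    stmt2_general hA A.one_mem hBideal
end

section
/- Let H be a Hopf algebra over a field k with bijective antipode S, and suppose r ∈ H satisfies the 1-dimensional partial comodule equations. Set e := S⁻¹(r)·r, let A be the smallest right coideal subalgebra of H containing e, and let π : H → H/(H·A⁺) be the canonical k-linear quotient map. Then: (a) r·e = r (so r ∈ H·e); (b) the set {h·e : h ∈ H and π(h_{(1)}) ⊗ h_{(2)}·e = π(r) ⊗ h·e in (H/(H·A⁺)) ⊗ H} equals the line k·r spanned by r; (c) r_{(1)}·e ⊗ r_{(2)} = r ⊗ r in H ⊗ H. (This identifies every 1-dimensional partial H-comodule with the cotensor product W □ He of the construction, whose underlying space is k·r and whose partial coaction sends r to r ⊗ r.) -/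
open TensorProduct

/-- The five 1-dimensional partial comodule equations for an element `r` of a Hopf
algebra `H`: `ε(r) = 1`; `r ⊗ r·S(r) = r₍₁₎ ⊗ r₍₂₎·S(r)`; `r·S(r₍₁₎) ⊗ r₍₂₎ = r·S(r) ⊗ r`;
`r ⊗ S(r)·r = r₍₁₎ ⊗ S(r₍₂₎)·r`; `S(r)·r ⊗ r = S(r)·r₍₁₎ ⊗ r₍₂₎`. -/
def OneDimPCM (k : Type*) {H : Type*} [Field k] [Ring H] [HopfAlgebra k H] (r : H) : Prop :=
  Coalgebra.counit (R := k) r = 1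
  ∧ r ⊗ₜ[k] (r * HopfAlgebra.antipode (R := k) r)
      = Coalgebra.comul (R := k) r * ((1 : H) ⊗ₜ[k] HopfAlgebra.antipode (R := k) r)
  ∧ (r ⊗ₜ[k] (1 : H)) *
        (LinearMap.rTensor H (HopfAlgebra.antipode (R := k)) (Coalgebra.comul (R := k) r))
      = (r * HopfAlgebra.antipode (R := k) r) ⊗ₜ[k] r
  ∧ r ⊗ₜ[k] (HopfAlgebra.antipode (R := k) r * r)
      = (LinearMap.lTensor H (HopfAlgebra.antipode (R := k)) (Coalgebra.comul (R := k) r))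
          * ((1 : H) ⊗ₜ[k] r)
  ∧ (HopfAlgebra.antipode (R := k) r * r) ⊗ₜ[k] r
      = ((HopfAlgebra.antipode (R := k) r) ⊗ₜ[k] (1 : H)) * Coalgebra.comul (R := k) r

/-!
Put `e = S⁻¹(r) r`. The partial comodule equations give `(e ⊗ 1) Δ(e) = e ⊗ e`. The elements `a`
with `(e ⊗ 1) Δ(a) = e ⊗ a` form a right coideal subalgebra, so all of `A` satisfies this equation,
and contracting it with the antipode yields `a e = ε(a) e` for `a ∈ A`. Hence `H A⁺` is the kernel
of right multiplication by `e`, and by flatness `π` may be replaced by `x ↦ x e`: the condition in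
(b) becomes `h₍₁₎ e ⊗ h₍₂₎ e = r ⊗ h e`. Applying `id ⊗ ε` to it gives `h e = ε(h) r`, while (c)
says that `h = r` is a solution.
-/

open Coalgebra HopfAlgebra

section Flat

variable {k M N P : Type*} [CommRing k] [AddCommGroup M] [Module k M] [AddCommGroup N] [Module k N]
  [AddCommGroup P] [Module k P] [Module.Flat k M]

theorem mem_span_tmul_of_rTensor_eq {f g : N →ₗ[k] P} {t : N ⊗[k] M}
    (h : f.rTensor M t = g.rTensor M t) :
    t ∈ Submodule.span k {x | ∃ n, f n = g n ∧ ∃ m : M, x = n ⊗ₜ[k] m} := by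
  have hker : (f - g).rTensor M t = 0 := by
    rw [LinearMap.rTensor_sub, LinearMap.sub_apply, h, sub_self]
  obtain ⟨w, rfl⟩ :=
    (Module.Flat.rTensor_exact M (LinearMap.exact_subtype_ker_map (f - g)) t).1 hker
  clear h hker
  induction w with
  | zero => simp
  | add x y hx hy => rw [map_add]; exact Submodule.add_mem _ hx hy
  | tmul n m => exact Submodule.subset_span ⟨n, sub_eq_zero.1 n.2, m, rfl⟩

theorem rTensor_mkQ_ker_eq_iff {f : N →ₗ[k] P} {s t : N ⊗[k] M} :
    (LinearMap.ker f).mkQ.rTensor M s = (LinearMap.ker f).mkQ.rTensor M t ↔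
      f.rTensor M s = f.rTensor M t := by
  have hinj : Function.Injective (((LinearMap.ker f).liftQ f le_rfl).rTensor M) :=
    Module.Flat.rTensor_preserves_injective_linearMap _
      (LinearMap.ker_eq_bot.1 (Submodule.ker_liftQ_eq_bot _ _ _ le_rfl))
  rw [← hinj.eq_iff, ← LinearMap.rTensor_comp_apply, ← LinearMap.rTensor_comp_apply,
    Submodule.liftQ_mkQ]

end Flat

section Antipode

variable {k H : Type*} [CommSemiring k] [Semiring H] [HopfAlgebra k H]

theorem toConv_comp_antipode_mul_self {B : Type*} [Semiring B] [Algebra k B] (f : H →ₐ[k] B) :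
    WithConv.toConv (f.toLinearMap ∘ₗ antipode k) * WithConv.toConv f.toLinearMap = 1 := by
  have h := LinearMap.algHom_comp_convMul_distrib f (WithConv.toConv (antipode k (A := H)))
    (WithConv.toConv LinearMap.id)
  rw [LinearMap.antipode_mul_id] at h
  apply WithConv.ofConv_injective
  simp only [LinearMap.comp_id] at h
  rw [← h]
  ext x
  simp [LinearMap.convOne_def]

/- With `i, j : H → H ⊗ H` the two canonical inclusions, `Δ = i * j` for the convolution product, so
the convolution inverse `Δ ∘ S` of `Δ` is `(j ∘ S) * (i ∘ S)`. -/
theorem comul_antipode (a : H) :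
    comul (R := k) (antipode k a) =
      TensorProduct.map (antipode k) (antipode k) (TensorProduct.comm k H H (comul a)) := by
  let i : H →ₐ[k] H ⊗[k] H := Algebra.TensorProduct.includeLeft
  let j : H →ₐ[k] H ⊗[k] H := Algebra.TensorProduct.includeRight
  have comul_eq : WithConv.toConv (comul (R := k) (A := H)) =
      WithConv.toConv i.toLinearMap * WithConv.toConv j.toLinearMap := by
    ext x
    simp [(ℛ k x).convMul_apply, i, j, (ℛ k x).eq]
  have left_inv : WithConv.toConv (j.toLinearMap ∘ₗ antipode k) *
      WithConv.toConv (i.toLinearMap ∘ₗ antipode k) * WithConv.toConv comul = 1 := by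
    rw [comul_eq, mul_assoc, ← mul_assoc (WithConv.toConv (i.toLinearMap ∘ₗ antipode k)),
      toConv_comp_antipode_mul_self, one_mul, toConv_comp_antipode_mul_self]
  have h := left_inv_eq_right_inv left_inv LinearMap.comul_right_inv
  have ha := LinearMap.congr_fun (congrArg WithConv.ofConv h) a
  rw [WithConv.ofConv_toConv, LinearMap.comp_apply] at ha
  rw [← ha, ← (ℛ k a).eq]
  simp [(ℛ k a).convMul_apply, i, j]

theorem rTensor_antipode_mul_tmul_one (t : H ⊗[k] H) (y : H) :
    (antipode k).rTensor H (t * y ⊗ₜ[k] 1) =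
      (antipode k y) ⊗ₜ[k] 1 * (antipode k).rTensor H t := by
  induction t with
  | zero => simp
  | add t u ht hu => simp only [add_mul, mul_add, map_add, ht, hu]
  | tmul a b => simp [antipode_mul_antidistrib]

theorem lTensor_antipode_one_tmul_mul (y : H) (t : H ⊗[k] H) :
    (antipode k).lTensor H (1 ⊗ₜ[k] y * t) =
      (antipode k).lTensor H t * 1 ⊗ₜ[k] antipode k y := by
  induction t with
  | zero => simp
  | add t u ht hu => simp only [add_mul, mul_add, map_add, ht, hu]
  | tmul a b => simp [antipode_mul_antidistrib]

theorem map_antipode_comm_tmul_one_mul (y : H) (t : H ⊗[k] H) :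
    TensorProduct.map (antipode k) (antipode k) (TensorProduct.comm k H H (y ⊗ₜ[k] 1 * t)) =
      TensorProduct.map (antipode k) (antipode k) (TensorProduct.comm k H H t) *
        1 ⊗ₜ[k] antipode k y := by
  induction t with
  | zero => simp
  | add t u ht hu => simp only [add_mul, mul_add, map_add, ht, hu]
  | tmul a b => simp [antipode_mul_antidistrib]

theorem mul_antipode_mul_self {r : H} (hε : counit (R := k) r = 1)
    (h : r ⊗ₜ[k] (1 : H) * (antipode k).rTensor H (comul r) = (r * antipode k r) ⊗ₜ[k] r) :
    r * antipode k r * r = r := by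
  have hmul (t : H ⊗[k] H) :
      LinearMap.mul' k H (r ⊗ₜ[k] 1 * t) = r * LinearMap.mul' k H t := by
    induction t with
    | zero => simp
    | add t u ht hu => simp only [mul_add, map_add, ht, hu]
    | tmul a b => simp [mul_assoc]
  calc r * antipode k r * r =
        LinearMap.mul' k H (r ⊗ₜ[k] 1 * (antipode k).rTensor H (comul r)) := by
        rw [h, LinearMap.mul'_apply]
    _ = r := by rw [hmul, mul_antipode_rTensor_comul_apply, hε, map_one, mul_one]

theorem antipode_mul_self_mul_antipode {r : H} (hε : counit (R := k) r = 1)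
    (h : r ⊗ₜ[k] (r * antipode k r) = comul r * (1 : H) ⊗ₜ[k] antipode k r) :
    antipode k r * r * antipode k r = antipode k r := by
  have hmul (t : H ⊗[k] H) (y : H) :
      LinearMap.mul' k H ((antipode k).rTensor H (t * 1 ⊗ₜ[k] y)) =
        LinearMap.mul' k H ((antipode k).rTensor H t) * y := by
    induction t with
    | zero => simp
    | add t u ht hu => simp only [add_mul, map_add, ht, hu]
    | tmul a b => simp [mul_assoc]
  calc antipode k r * r * antipode k r =
        LinearMap.mul' k H ((antipode k).rTensor H (r ⊗ₜ[k] (r * antipode k r))) := by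
        rw [LinearMap.rTensor_tmul, LinearMap.mul'_apply, mul_assoc]
    _ = antipode k r := by
      rw [h, hmul, mul_antipode_rTensor_comul_apply, hε, map_one, one_mul]

end Antipode

section AntipodePreimage

variable {k H : Type*} [CommSemiring k] [Semiring H] [HopfAlgebra k H]
  (hS : Function.Injective (antipode k (A := H))) {r r' : H} (hr' : antipode k r' = r)

include hS hr'

theorem mul_antipode_preimage_mul_self
    (h : antipode k r * r * antipode k r = antipode k r) : r * r' * r = r := by
  apply hS
  rw [antipode_mul_antidistrib, antipode_mul_antidistrib, hr', ← mul_assoc, h]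

theorem antipode_preimage_mul_self_mul
    (h : r * antipode k r * r = r) : r' * r * r' = r' := by
  apply hS
  rw [antipode_mul_antidistrib, antipode_mul_antidistrib, hr', ← mul_assoc, h]

variable [Module.Flat k H]

theorem comul_mul_antipode_preimage_tmul_one
    (h : r ⊗ₜ[k] (1 : H) * (antipode k).rTensor H (comul r) = (r * antipode k r) ⊗ₜ[k] r) :
    comul r * r' ⊗ₜ[k] (1 : H) = (r * r') ⊗ₜ[k] r := by
  apply Module.Flat.rTensor_preserves_injective_linearMap _ hS
  rw [rTensor_antipode_mul_tmul_one, hr', h, LinearMap.rTensor_tmul, antipode_mul_antidistrib, hr']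

theorem one_tmul_antipode_preimage_mul_comul
    (h : r ⊗ₜ[k] (antipode k r * r) = (antipode k).lTensor H (comul r) * (1 : H) ⊗ₜ[k] r) :
    (1 : H) ⊗ₜ[k] r' * comul r = r ⊗ₜ[k] (r' * r) := by
  apply Module.Flat.lTensor_preserves_injective_linearMap _ hS
  rw [lTensor_antipode_one_tmul_mul, hr', ← h, LinearMap.lTensor_tmul, antipode_mul_antidistrib,
    hr']

theorem tmul_one_mul_comul_antipode_preimage
    (h : r ⊗ₜ[k] (r * antipode k r) = comul r * (1 : H) ⊗ₜ[k] antipode k r) :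
    r ⊗ₜ[k] (1 : H) * comul r' = (r * r') ⊗ₜ[k] r' := by
  apply (TensorProduct.comm k H H).injective
  apply TensorProduct.map_injective_of_flat_flat _ _ hS hS
  rw [map_antipode_comm_tmul_one_mul, ← comul_antipode, hr', ← h, TensorProduct.comm_tmul,
    TensorProduct.map_tmul, antipode_mul_antidistrib, hr']

end AntipodePreimage

section RelCoinvariants

theorem tmul_one_mul_comul_mul_self {k H : Type*} [CommSemiring k] [Semiring H] [Bialgebra k H]
    {r r' : H} (h : r' * r * r' = r')
    (h_comul' : r ⊗ₜ[k] (1 : H) * comul r' = (r * r') ⊗ₜ[k] r')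
    (h_comul : (1 : H) ⊗ₜ[k] r' * comul r = r ⊗ₜ[k] (r' * r)) :
    (r' * r) ⊗ₜ[k] (1 : H) * comul (r' * r) = (r' * r) ⊗ₜ[k] (r' * r) := by
  have split (x y : H) : (x * y) ⊗ₜ[k] (1 : H) = x ⊗ₜ 1 * y ⊗ₜ 1 := by simp
  calc (r' * r) ⊗ₜ[k] (1 : H) * comul (r' * r)
      = r' ⊗ₜ 1 * (r ⊗ₜ 1 * comul r') * comul r := by
        rw [split, Bialgebra.comul_mul]; simp only [mul_assoc]
    _ = r' ⊗ₜ 1 * (1 ⊗ₜ r' * comul r) := by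
        rw [h_comul', ← mul_assoc]; simp [← mul_assoc, h]
    _ = (r' * r) ⊗ₜ[k] (r' * r) := by simp [h_comul]

/-- `A` is a right coideal subalgebra: `Δ(A) ⊆ A ⊗ H`, where `A ⊗ H` stands for its image in
`H ⊗ H`. -/
def IsRightCoidealSubalgebra {k H : Type*} [CommSemiring k] [Semiring H] [Bialgebra k H]
    (A : Subalgebra k H) : Prop :=
  ∀ a ∈ A, comul a ∈ Submodule.span k {x : H ⊗[k] H | ∃ b ∈ A, ∃ h : H, x = b ⊗ₜ[k] h}

/-- The subalgebra of elements `a` that are coinvariant relative to `e`, i.e.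
`e a₍₁₎ ⊗ a₍₂₎ = e ⊗ a`. For `e = 1` this is the equation `Δ(a) = 1 ⊗ a` of coinvariants. -/
def relCoinvariants (k : Type*) {H : Type*} [CommSemiring k] [Semiring H] [Bialgebra k H] (e : H) :
    Subalgebra k H where
  carrier := {a | e ⊗ₜ[k] (1 : H) * comul a = e ⊗ₜ[k] a}
  mul_mem' {a b} ha hb := by
    calc e ⊗ₜ[k] (1 : H) * comul (a * b)
        = 1 ⊗ₜ a * (e ⊗ₜ 1 * comul b) := by
          rw [Bialgebra.comul_mul, ← mul_assoc, ha, ← mul_assoc]; simp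
      _ = e ⊗ₜ[k] (a * b) := by rw [hb]; simp
  add_mem' {a b} ha hb := by
    change e ⊗ₜ[k] (1 : H) * comul (a + b) = e ⊗ₜ[k] (a + b)
    rw [map_add, mul_add, ha, hb, TensorProduct.tmul_add]
  algebraMap_mem' c := by
    change e ⊗ₜ[k] (1 : H) * comul (algebraMap k H c) = e ⊗ₜ[k] algebraMap k H c
    rw [Bialgebra.comul_algebraMap, Algebra.TensorProduct.algebraMap_apply']
    simp

theorem isRightCoidealSubalgebra_relCoinvariants {k H : Type*} [CommRing k] [Ring H]
    [Bialgebra k H] [Module.Flat k H] (e : H) :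
    IsRightCoidealSubalgebra (relCoinvariants k e) := by
  intro a ha
  let f : H →ₗ[k] H ⊗[k] H := LinearMap.mulLeft k (e ⊗ₜ[k] (1 : H)) ∘ₗ comul
  have assoc_mul : (TensorProduct.assoc k H H H).toLinearMap ∘ₗ
      (LinearMap.mulLeft k (e ⊗ₜ[k] (1 : H))).rTensor H =
      LinearMap.mulLeft k (e ⊗ₜ[k] (1 : H ⊗[k] H)) ∘ₗ TensorProduct.assoc k H H H := by
    ext; simp
  have mul_lTensor : LinearMap.mulLeft k (e ⊗ₜ[k] (1 : H ⊗[k] H)) ∘ₗ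
      (comul (R := k)).lTensor H = comul.lTensor H ∘ₗ LinearMap.mulLeft k (e ⊗ₜ[k] (1 : H)) := by
    ext; simp
  refine Submodule.span_mono ?_
    (mem_span_tmul_of_rTensor_eq (f := f) (g := TensorProduct.mk k H H e) ?_)
  · rintro _ ⟨b, hb, h, rfl⟩
    exact ⟨b, hb, h, rfl⟩
  apply (TensorProduct.assoc k H H H).injective
  calc TensorProduct.assoc k H H H (f.rTensor H (comul a))
      = e ⊗ₜ[k] (1 : H ⊗[k] H) * TensorProduct.assoc k H H H (comul.rTensor H (comul a)) := by
        rw [LinearMap.rTensor_comp_apply]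
        exact LinearMap.congr_fun assoc_mul _
    _ = e ⊗ₜ[k] (1 : H ⊗[k] H) * comul.lTensor H (comul a) := by rw [coassoc_apply]
    _ = comul.lTensor H (e ⊗ₜ[k] (1 : H) * comul a) := LinearMap.congr_fun mul_lTensor _
    _ = e ⊗ₜ[k] comul a := by rw [show _ * _ = _ from ha, LinearMap.lTensor_tmul]
    _ = TensorProduct.assoc k H H H ((TensorProduct.mk k H H e).rTensor H (comul a)) := by
        generalize comul (R := k) a = t
        induction t with
        | zero => simp
        | add t u ht hu => simp only [map_add, ← ht, ← hu, TensorProduct.tmul_add]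
        | tmul x y => simp

variable {k H : Type*} [CommSemiring k] [Semiring H] [HopfAlgebra k H] {a e : H}

theorem mul_antipode_of_mem_relCoinvariants (ha : a ∈ relCoinvariants k e) :
    e * antipode k a = counit (R := k) a • e := by
  have hmul (t : H ⊗[k] H) :
      LinearMap.mul' k H ((antipode k).lTensor H (e ⊗ₜ[k] 1 * t)) =
        e * LinearMap.mul' k H ((antipode k).lTensor H t) := by
    induction t with
    | zero => simp
    | add t u ht hu => simp only [mul_add, map_add, ht, hu]
    | tmul a b => simp [mul_assoc]
  calc e * antipode k a
      = LinearMap.mul' k H ((antipode k).lTensor H (e ⊗ₜ[k] 1 * comul a)) := by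
        rw [show _ * _ = _ from ha, LinearMap.lTensor_tmul, LinearMap.mul'_apply]
    _ = counit (R := k) a • e := by
        rw [hmul, mul_antipode_lTensor_comul_apply, ← Algebra.commutes, ← Algebra.smul_def]

theorem mul_eq_counit_smul_of_mem_relCoinvariants (hS : Function.Injective (antipode k (A := H)))
    (he : antipode k e * e = antipode k e) (ha : a ∈ relCoinvariants k e) :
    a * e = counit (R := k) a • e := by
  apply hS
  calc antipode k (a * e) = antipode k e * (e * antipode k a) := by
        rw [antipode_mul_antidistrib, ← mul_assoc, he]
    _ = antipode k (counit (R := k) a • e) := by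
        rw [mul_antipode_of_mem_relCoinvariants ha, mul_smul_comm, he, map_smul]

end RelCoinvariants

section Cotensor

variable {k H : Type*} [CommRing k] [Ring H] [Bialgebra k H]

/-- The left ideal `H A⁺` of `H`, as a `k`-submodule. -/
def leftIdealAugmentation (A : Subalgebra k H) : Submodule k H :=
  Submodule.span k {x : H | ∃ (h : H) (a : H), a ∈ A ∧ counit (R := k) a = 0 ∧ x = h * a}

theorem leftIdealAugmentation_eq_ker_mulRight {A : Subalgebra k H} {e : H} (heA : e ∈ A)
    (hε : counit (R := k) e = 1) (hmul : ∀ a ∈ A, a * e = counit (R := k) a • e) :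
    leftIdealAugmentation A = LinearMap.ker (LinearMap.mulRight k e) := by
  apply le_antisymm
  · rw [leftIdealAugmentation, Submodule.span_le]
    rintro _ ⟨h, a, ha, ha0, rfl⟩
    simp [mul_assoc, hmul a ha, ha0]
  · intro x hx
    have hxe : x * e = 0 := hx
    exact Submodule.subset_span
      ⟨x, 1 - e, A.sub_mem A.one_mem heA, by simp [hε], by rw [mul_sub, mul_one, hxe, sub_zero]⟩

variable [Module.Flat k H] {e r : H}

theorem map_mkQ_ker_mulRight_comul_eq_iff (hre : r * e = r) (h : H) :
    TensorProduct.map (LinearMap.ker (LinearMap.mulRight k e)).mkQ LinearMap.id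
        (comul h * (1 : H) ⊗ₜ[k] e) =
      (LinearMap.ker (LinearMap.mulRight k e)).mkQ r ⊗ₜ[k] (h * e) ↔
      comul h * e ⊗ₜ[k] e = r ⊗ₜ[k] (h * e) := by
  have rTensor_mulRight :
      (LinearMap.mulRight k e).rTensor H = LinearMap.mulRight k (e ⊗ₜ[k] (1 : H)) := by
    ext; simp
  refine (rTensor_mkQ_ker_eq_iff (s := comul h * (1 : H) ⊗ₜ[k] e) (t := r ⊗ₜ[k] (h * e))).trans ?_
  rw [rTensor_mulRight, LinearMap.mulRight_apply, LinearMap.mulRight_apply, mul_assoc]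
  simp [hre]

theorem setOf_map_mkQ_ker_mulRight_comul_eq_range (hε : counit (R := k) e = 1) (hre : r * e = r)
    (hr : comul r * e ⊗ₜ[k] (1 : H) = r ⊗ₜ[k] r) :
    {x : H | ∃ h : H, x = h * e ∧
      TensorProduct.map (LinearMap.ker (LinearMap.mulRight k e)).mkQ LinearMap.id
          (comul h * (1 : H) ⊗ₜ[k] e) =
        (LinearMap.ker (LinearMap.mulRight k e)).mkQ r ⊗ₜ[k] (h * e)} =
      Set.range fun c : k => c • r := by
  simp only [map_mkQ_ker_mulRight_comul_eq_iff hre]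
  ext x
  constructor
  · rintro ⟨h, rfl, hh⟩
    have rid_counit : (TensorProduct.rid k H).toLinearMap ∘ₗ counit.lTensor H ∘ₗ
        LinearMap.mulRight k (e ⊗ₜ[k] e) =
        LinearMap.mulRight k e ∘ₗ TensorProduct.rid k H ∘ₗ counit.lTensor H := by
      ext; simp [hε]
    exact ⟨counit h, by simpa [hh, hε] using LinearMap.congr_fun rid_counit (comul h)⟩
  · rintro ⟨c, rfl⟩
    have hee : e ⊗ₜ[k] e = e ⊗ₜ[k] (1 : H) * 1 ⊗ₜ[k] e := by simp
    refine ⟨c • r, by rw [smul_mul_assoc, hre], ?_⟩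
    rw [map_smul, smul_mul_assoc, hee, ← mul_assoc, hr]
    simp [hre]

end Cotensor

theorem stmt15_general {k H : Type*} [CommRing k] [Ring H] [HopfAlgebra k H] [Module.Flat k H]
    (hS : Function.Injective (antipode k (A := H)))
    {r r' e : H} (hr' : antipode k r' = r) (he : e = r' * r)
    (hε : counit (R := k) r = 1)
    (h_comul_mul : r ⊗ₜ[k] (r * antipode k r) = comul r * (1 : H) ⊗ₜ[k] antipode k r)
    (h_mul_rTensor : r ⊗ₜ[k] (1 : H) * (antipode k).rTensor H (comul r) =
      (r * antipode k r) ⊗ₜ[k] r)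
    (h_lTensor_mul : r ⊗ₜ[k] (antipode k r * r) =
      (antipode k).lTensor H (comul r) * (1 : H) ⊗ₜ[k] r)
    {A : Subalgebra k H} (hA : IsLeast {A' | IsRightCoidealSubalgebra A' ∧ e ∈ A'} A) :
    r * e = r
    ∧ {x : H | ∃ h : H, x = h * e ∧
        TensorProduct.map (leftIdealAugmentation A).mkQ LinearMap.id (comul h * (1 : H) ⊗ₜ[k] e) =
          (leftIdealAugmentation A).mkQ r ⊗ₜ[k] (h * e)} =
      Set.range (fun c : k => c • r)
    ∧ comul r * e ⊗ₜ[k] (1 : H) = r ⊗ₜ[k] r := by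
  have hrr'r : r * r' * r = r :=
    mul_antipode_preimage_mul_self hS hr' (antipode_mul_self_mul_antipode hε h_comul_mul)
  have hre : r * e = r := by rw [he, ← mul_assoc, hrr'r]
  have hr : comul r * e ⊗ₜ[k] (1 : H) = r ⊗ₜ[k] r := by
    calc comul r * e ⊗ₜ[k] (1 : H) = comul r * r' ⊗ₜ 1 * r ⊗ₜ 1 := by simp [he, mul_assoc]
      _ = r ⊗ₜ[k] r := by
        rw [comul_mul_antipode_preimage_tmul_one hS hr' h_mul_rTensor]; simp [hrr'r]
  have hεe : counit (R := k) e = 1 := by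
    rw [he, Bialgebra.counit_mul, hε, mul_one, ← counit_antipode, hr', hε]
  have hSe : antipode k e * e = antipode k e := by
    rw [he, antipode_mul_antidistrib, hr', mul_assoc, ← mul_assoc r, hrr'r]
  have he_mem : e ∈ relCoinvariants k e := he ▸ tmul_one_mul_comul_mul_self
    (antipode_preimage_mul_self_mul hS hr' (mul_antipode_mul_self hε h_mul_rTensor))
    (tmul_one_mul_comul_antipode_preimage hS hr' h_comul_mul)
    (one_tmul_antipode_preimage_mul_comul hS hr' h_lTensor_mul)
  have hA_le : A ≤ relCoinvariants k e :=
    hA.2 ⟨isRightCoidealSubalgebra_relCoinvariants e, he_mem⟩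
  rw [leftIdealAugmentation_eq_ker_mulRight hA.1.2 hεe fun a ha =>
    mul_eq_counit_smul_of_mem_relCoinvariants hS hSe (hA_le ha)]
  exact ⟨hre, setOf_map_mkQ_ker_mulRight_comul_eq_range hεe hre hr, hr⟩

/-- let `H` have bijective antipode, let `r ∈ H` satisfy the 1-dimensional
partial comodule equations, set `e := S⁻¹(r)·r`, let `A` be the smallest right coideal
subalgebra containing `e` and `π : H → H/(H·A⁺)` the quotient map. Then (a) `r·e = r`;
(b) `{h·e : π(h₍₁₎) ⊗ h₍₂₎·e = π(r) ⊗ h·e}` is exactly the line `k·r`; and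
(c) `r₍₁₎·e ⊗ r₍₂₎ = r ⊗ r`. -/
theorem stmt15 (k H : Type*) [Field k] [Ring H] [HopfAlgebra k H]
    (hS : Function.Bijective (HopfAlgebra.antipode (R := k) (A := H)))
    (r : H) (hr : OneDimPCM k r)
    (r' : H) (hr' : HopfAlgebra.antipode (R := k) r' = r)
    (e : H) (he : e = r' * r)
    (A : Subalgebra k H)
    (hA : ∀ a ∈ A, Coalgebra.comul (R := k) a ∈
      Submodule.span k {x : H ⊗[k] H | ∃ b ∈ A, ∃ h : H, x = b ⊗ₜ[k] h})
    (heA : e ∈ A)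
    (hmin : ∀ A' : Subalgebra k H,
      (∀ a ∈ A', Coalgebra.comul (R := k) a ∈
        Submodule.span k {x : H ⊗[k] H | ∃ b ∈ A', ∃ h : H, x = b ⊗ₜ[k] h}) →
      e ∈ A' → A ≤ A')
    (B : Submodule k H)
    (hB : B = Submodule.span k {x : H | ∃ (h : H) (a : H), a ∈ A
      ∧ Coalgebra.counit (R := k) a = 0 ∧ x = h * a}) :
    -- (a)
    r * e = r
    -- (b)
    ∧ {x : H | ∃ h : H, x = h * e ∧
        TensorProduct.map B.mkQ LinearMap.id
            (Coalgebra.comul (R := k) h * ((1 : H) ⊗ₜ[k] e))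
          = B.mkQ r ⊗ₜ[k] (h * e)}
      = Set.range (fun c : k => c • r)
    -- (c)
    ∧ Coalgebra.comul (R := k) r * (e ⊗ₜ[k] (1 : H)) = r ⊗ₜ[k] r := by
  subst hB
  obtain ⟨hε, h_comul_mul, h_mul_rTensor, h_lTensor_mul, -⟩ := hr
  exact stmt15_general hS.injective hr' he hε h_comul_mul h_mul_rTensor h_lTensor_mul
    ⟨⟨hA, heA⟩, fun A' hA' => hmin A' hA'.1 hA'.2⟩
end
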